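/- arXiv:2003.07164 — 2 statements merged into one kernel-verified Lean document; each statement's English description precedes it below -/
import Mathlib

section
/- Let ω = exp(2πi/3) and define on ℂ³ (indexed by ZMod 3) the operators X e_n = e_{n+1}, Z e_n = ω^n e_n, D_{(u,v)} = ω^{2uv} X^u Z^v, A_{(0,0)} = (1/3) Σ_{u,v} D_{(u,v)}, A_χ = D_χ A_{(0,0)} D_χ†, and W_χ(v) = (1/3)⟨v, A_χ v⟩. Then for every unit vector v ∈ ℂ³ and every affine line L in the phase space (ZMod 3)² (i.e., L = {χ₀ + t·δ : t ∈ ZMod 3} for some χ₀ and some δ ≠ 0), the sum Σ_{χ ∈ L} W_χ(v) is nonnegative. In particular, the discrete Wigner function of a pure qutrit state cannot be negative at three collinear phase space points. -/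
open scoped BigOperators
open Complex Matrix

noncomputable def omg (p : ℕ) : ℂ := Complex.exp (2 * Real.pi * Complex.I / p)

noncomputable def Hmat (p : ℕ) : Matrix (ZMod p) (ZMod p) ℂ :=
  Matrix.of fun j k => (Real.sqrt p : ℂ)⁻¹ * omg p ^ ((j * k : ZMod p).val)

noncomputable def VS (p : ℕ) : Matrix (ZMod p) (ZMod p) ℂ :=
  Matrix.diagonal fun k => omg p ^ (((2 : ZMod p)⁻¹ * k ^ 2).val)

def Xmat (p : ℕ) : Matrix (ZMod p) (ZMod p) ℂ :=
  Matrix.of fun j k => if j = k + 1 then 1 else 0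

noncomputable def Zmat (p : ℕ) : Matrix (ZMod p) (ZMod p) ℂ :=
  Matrix.diagonal fun k => omg p ^ (k.val)

noncomputable def Dmat (p : ℕ) [NeZero p] (u v : ZMod p) : Matrix (ZMod p) (ZMod p) ℂ :=
  omg p ^ (((2 : ZMod p)⁻¹ * u * v).val) • (Xmat p ^ u.val * Zmat p ^ v.val)

noncomputable def A0 (p : ℕ) [NeZero p] : Matrix (ZMod p) (ZMod p) ℂ :=
  (p : ℂ)⁻¹ • ∑ u : ZMod p, ∑ v : ZMod p, Dmat p u v

noncomputable def Amat (p : ℕ) [NeZero p] (χ : ZMod p × ZMod p) : Matrix (ZMod p) (ZMod p) ℂ :=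
  Dmat p χ.1 χ.2 * A0 p * (Dmat p χ.1 χ.2)ᴴ

noncomputable def W (p : ℕ) [NeZero p] (χ : ZMod p × ZMod p) (v : ZMod p → ℂ) : ℂ :=
  (p : ℂ)⁻¹ * (star v ⬝ᵥ (Amat p χ).mulVec v)

def Pmat (p : ℕ) : Matrix (ZMod p) (ZMod p) ℂ :=
  Matrix.of fun j k => if j = -k then 1 else 0

open scoped ComplexOrder

/-!
For odd `p` the displacements multiply by
`D χ * D η = ψ (2⁻¹ * σ (χ, η)) • D (χ + η)`, where `ψ` is the standard character of `ZMod p` and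
`σ` is a symplectic form. Conjugation therefore only changes phases, and
`A χ = p⁻¹ * ∑ η, ψ (σ (χ, η)) • D η`. Summed over a line in direction `δ`, the phases cancel unless
`η` lies on the line through the origin spanned by `δ`, so the sum of the phase point operators is
`∑ t, ψ (t * σ (χ₀, δ)) • D (t • δ)`. The summands form a unitary representation of `ZMod p`, and
the sum `S` of a unitary representation of a finite group `G` satisfies `Sᴴ * S = |G| • S`, which
makes it positive semidefinite.
-/

section UnitaryRepresentation

variable {G n : Type*} [AddGroup G] [Fintype G] [Fintype n]

lemma conjTranspose_sum_mul_sum_eq_card_nsmul {R : Type*} [Semiring R] [StarRing R]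
    {U : G → Matrix n n R} (hadd : ∀ s t, U (s + t) = U s * U t)
    (hneg : ∀ t, U (-t) = (U t)ᴴ) :
    (∑ t, U t)ᴴ * ∑ t, U t = Fintype.card G • ∑ t, U t := by
  calc (∑ t, U t)ᴴ * ∑ t, U t = ∑ s, ∑ t, U (-s + t) := by
        simp only [conjTranspose_sum, Finset.sum_mul_sum, hadd, hneg]
    _ = ∑ _s : G, ∑ t, U t :=
        Finset.sum_congr rfl fun s _ ↦ Equiv.sum_comp (Equiv.addLeft (-s)) U
    _ = Fintype.card G • ∑ t, U t := by rw [Finset.sum_const, Finset.card_univ]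

lemma posSemidef_sum_of_map_add_of_map_neg {𝕜 : Type*} [RCLike 𝕜] {U : G → Matrix n n 𝕜}
    (hadd : ∀ s t, U (s + t) = U s * U t) (hneg : ∀ t, U (-t) = (U t)ᴴ) :
    (∑ t, U t).PosSemidef := by
  have hcard : (Fintype.card G : 𝕜) ≠ 0 := Nat.cast_ne_zero.mpr Fintype.card_ne_zero
  rw [← inv_smul_smul₀ hcard (∑ t, U t), Nat.cast_smul_eq_nsmul,
    ← conjTranspose_sum_mul_sum_eq_card_nsmul hadd hneg]
  exact (posSemidef_conjTranspose_mul_self _).smul (inv_nonneg.mpr (Nat.cast_nonneg _))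

end UnitaryRepresentation

section SymplecticForm

variable {R : Type*} [CommRing R]

/-- The standard symplectic form on the phase space `R × R`, with the sign for which
`D χ * D η * (D χ)ᴴ = ψ (symplecticForm χ η) • D η`. -/
def symplecticForm (χ η : R × R) : R := χ.2 * η.1 - χ.1 * η.2

lemma symplecticForm_add_smul_left (χ δ η : R × R) (t : R) :
    symplecticForm (χ + t • δ) η = symplecticForm χ η + t * symplecticForm δ η := by
  simp only [symplecticForm, Prod.fst_add, Prod.snd_add, Prod.smul_fst, Prod.smul_snd, smul_eq_mul]
  ring

lemma symplecticForm_smul_right (χ δ : R × R) (t : R) :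
    symplecticForm χ (t • δ) = t * symplecticForm χ δ := by
  simp only [symplecticForm, Prod.smul_fst, Prod.smul_snd, smul_eq_mul]
  ring

variable {δ : R × R}

lemma symplecticForm_eq_zero_iff (hδ : IsCoprime δ.1 δ.2) {η : R × R} :
    symplecticForm δ η = 0 ↔ ∃ t : R, t • δ = η := by
  constructor
  · intro h
    obtain ⟨a, b, hab⟩ := hδ
    rw [symplecticForm] at h
    refine ⟨a * η.1 + b * η.2, Prod.ext ?_ ?_⟩
    · rw [Prod.smul_fst, smul_eq_mul]
      linear_combination η.1 * hab - b * h
    · rw [Prod.smul_snd, smul_eq_mul]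
      linear_combination η.2 * hab + a * h
  · rintro ⟨t, rfl⟩
    rw [symplecticForm_smul_right, symplecticForm, mul_comm δ.2, sub_self, mul_zero]

lemma smul_left_injective_of_isCoprime (hδ : IsCoprime δ.1 δ.2) :
    Function.Injective fun t : R ↦ t • δ := by
  intro s t hst
  obtain ⟨a, b, hab⟩ := hδ
  obtain ⟨h₁, h₂⟩ := Prod.ext_iff.mp hst
  simp only [Prod.smul_fst, Prod.smul_snd, smul_eq_mul] at h₁ h₂
  linear_combination a * h₁ + b * h₂ - (s - t) * hab

lemma sum_ite_symplecticForm_eq_zero [Fintype R] [DecidableEq R] {M : Type*} [AddCommMonoid M]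
    (hδ : IsCoprime δ.1 δ.2) (f : R × R → M) :
    ∑ η, (if symplecticForm δ η = 0 then f η else 0) = ∑ t : R, f (t • δ) := by
  have hline : Finset.univ.filter (fun η ↦ symplecticForm δ η = 0) =
      Finset.univ.image fun t : R ↦ t • δ := by
    ext η
    simp [symplecticForm_eq_zero_iff hδ]
  rw [← Finset.sum_filter, hline,
    Finset.sum_image (smul_left_injective_of_isCoprime hδ).injOn]

end SymplecticForm

section Displacement

open ZMod (stdAddChar)

variable {p : ℕ}

lemma inv_two_add_inv_two (hp : Odd p) : (2⁻¹ : ZMod p) + 2⁻¹ = 1 := by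
  have h := ZMod.coe_mul_inv_eq_one 2 (Nat.coprime_two_left.mpr hp)
  rwa [Nat.cast_two, two_mul] at h

lemma Xmat_apply (j k : ZMod p) : Xmat p j k = if j = k + 1 then 1 else 0 := rfl

variable [NeZero p]

lemma omg_pow_val (x : ZMod p) : omg p ^ x.val = stdAddChar x := by
  rw [ZMod.stdAddChar_apply, ZMod.toCircle_apply, omg, ← Complex.exp_nat_mul]
  congr 1
  ring

lemma star_stdAddChar (x : ZMod p) : star (stdAddChar x) = stdAddChar (-x) :=
  (AddChar.map_neg_eq_conj stdAddChar x).symm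

lemma Xmat_pow_apply (m : ℕ) (j k : ZMod p) :
    (Xmat p ^ m) j k = if j = k + m then 1 else 0 := by
  induction m generalizing k with
  | zero => simp [Matrix.one_apply]
  | succ m ih =>
    simp only [pow_succ, Matrix.mul_apply, ih, Xmat_apply, mul_ite, mul_one, mul_zero,
      Finset.sum_ite_eq', Finset.mem_univ, if_true, Nat.cast_succ, add_assoc,
      add_comm (1 : ZMod p)]

lemma Zmat_pow_val (v : ZMod p) :
    Zmat p ^ v.val = Matrix.diagonal fun k ↦ stdAddChar (v * k) := by
  simp only [Zmat, Matrix.diagonal_pow, omg_pow_val]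
  congr 1
  ext k
  rw [Pi.pow_apply, ← AddChar.map_nsmul_eq_pow, nsmul_eq_mul, ZMod.natCast_zmod_val]

lemma Dmat_apply (u v j k : ZMod p) :
    Dmat p u v j k = if j = k + u then stdAddChar (2⁻¹ * u * v + v * k) else 0 := by
  rw [Dmat, Zmat_pow_val, omg_pow_val, Matrix.smul_apply, Matrix.mul_diagonal, Xmat_pow_apply,
    ZMod.natCast_zmod_val, AddChar.map_add_eq_mul]
  simp

lemma Dmat_mul_Dmat (hp : Odd p) (χ η : ZMod p × ZMod p) :
    Dmat p χ.1 χ.2 * Dmat p η.1 η.2 =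
      stdAddChar (2⁻¹ * symplecticForm χ η) • Dmat p (χ + η).1 (χ + η).2 := by
  ext j k
  simp only [Matrix.mul_apply, Matrix.smul_apply, Dmat_apply, mul_ite, mul_zero,
    Finset.sum_ite_eq', Finset.mem_univ, if_true, smul_eq_mul, ite_mul, zero_mul,
    ← AddChar.map_add_eq_mul, Prod.fst_add, Prod.snd_add, add_assoc, add_comm η.1 χ.1]
  refine if_congr Iff.rfl (congrArg _ ?_) rfl
  rw [symplecticForm]
  linear_combination -χ.2 * η.1 * inv_two_add_inv_two hp

lemma conjTranspose_Dmat (hp : Odd p) (u v : ZMod p) : (Dmat p u v)ᴴ = Dmat p (-u) (-v) := by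
  ext j k
  rw [Matrix.conjTranspose_apply, Dmat_apply, Dmat_apply, apply_ite star, star_zero,
    star_stdAddChar]
  by_cases h : k = j + u
  · subst h
    rw [if_pos rfl, if_pos (by ring)]
    congr 1
    linear_combination -u * v * inv_two_add_inv_two hp
  · rw [if_neg h, if_neg fun hj ↦ h (by rw [hj]; ring)]

lemma Dmat_mul_Dmat_mul_conjTranspose (hp : Odd p) (χ η : ZMod p × ZMod p) :
    Dmat p χ.1 χ.2 * Dmat p η.1 η.2 * (Dmat p χ.1 χ.2)ᴴ =
      stdAddChar (symplecticForm χ η) • Dmat p η.1 η.2 := by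
  rw [conjTranspose_Dmat hp, Dmat_mul_Dmat hp, Matrix.smul_mul, ← Prod.fst_neg, ← Prod.snd_neg,
    Dmat_mul_Dmat hp, smul_smul, ← AddChar.map_add_eq_mul, add_neg_cancel_comm]
  congr 2
  simp only [symplecticForm, Prod.fst_add, Prod.snd_add, Prod.fst_neg, Prod.snd_neg]
  linear_combination (χ.2 * η.1 - χ.1 * η.2) * inv_two_add_inv_two hp

lemma Amat_eq_sum_Dmat (hp : Odd p) (χ : ZMod p × ZMod p) :
    Amat p χ = (p : ℂ)⁻¹ • ∑ η : ZMod p × ZMod p,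
      stdAddChar (symplecticForm χ η) • Dmat p η.1 η.2 := by
  simp only [← Dmat_mul_Dmat_mul_conjTranspose hp, ← Finset.sum_mul, ← Finset.mul_sum,
    Fintype.sum_prod_type, Amat, A0, Matrix.mul_smul, Matrix.smul_mul]

lemma sum_stdAddChar_symplecticForm_line (χ₀ δ η : ZMod p × ZMod p) :
    ∑ t : ZMod p, stdAddChar (symplecticForm (χ₀ + t • δ) η) =
      if symplecticForm δ η = 0 then (p : ℂ) * stdAddChar (symplecticForm χ₀ η) else 0 := by
  simp only [symplecticForm_add_smul_left, AddChar.map_add_eq_mul, ← Finset.mul_sum,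
    AddChar.sum_mulShift _ (ZMod.isPrimitive_stdAddChar p), ZMod.card, Nat.cast_ite,
    Nat.cast_zero, mul_ite, mul_zero, mul_comm (p : ℂ)]

lemma sum_Amat_line_eq_sum_Dmat (hp : Odd p) (χ₀ : ZMod p × ZMod p) {δ : ZMod p × ZMod p}
    (hδ : IsCoprime δ.1 δ.2) :
    ∑ t : ZMod p, Amat p (χ₀ + t • δ) =
      ∑ t : ZMod p, stdAddChar (t * symplecticForm χ₀ δ) • Dmat p (t • δ).1 (t • δ).2 := by
  have hp₀ : (p : ℂ) ≠ 0 := NeZero.ne _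
  simp only [Amat_eq_sum_Dmat hp, ← Finset.smul_sum]
  rw [Finset.sum_comm]
  simp only [← Finset.sum_smul, sum_stdAddChar_symplecticForm_line, ite_smul, zero_smul]
  rw [sum_ite_symplecticForm_eq_zero hδ]
  simp only [mul_smul, ← Finset.smul_sum, symplecticForm_smul_right, inv_smul_smul₀ hp₀]

lemma posSemidef_sum_Amat_line (hp : Odd p) (χ₀ : ZMod p × ZMod p) {δ : ZMod p × ZMod p}
    (hδ : IsCoprime δ.1 δ.2) : (∑ t : ZMod p, Amat p (χ₀ + t • δ)).PosSemidef := by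
  rw [sum_Amat_line_eq_sum_Dmat hp χ₀ hδ]
  refine posSemidef_sum_of_map_add_of_map_neg (fun s t ↦ ?_) fun t ↦ ?_
  · have hparallel : symplecticForm (s • δ) (t • δ) = 0 := by
      simp only [symplecticForm, Prod.smul_fst, Prod.smul_snd, smul_eq_mul]
      ring
    rw [smul_mul_smul_comm, Dmat_mul_Dmat hp, hparallel, mul_zero, AddChar.map_zero_eq_one,
      one_smul, ← AddChar.map_add_eq_mul, ← add_mul, ← add_smul]
  · rw [Matrix.conjTranspose_smul, star_stdAddChar, conjTranspose_Dmat hp, neg_mul, neg_smul,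
      Prod.fst_neg, Prod.snd_neg]

lemma sum_W_eq_dotProduct_mulVec {ι : Type*} (s : Finset ι) (χ : ι → ZMod p × ZMod p)
    (v : ZMod p → ℂ) :
    ∑ i ∈ s, W p (χ i) v = (p : ℂ)⁻¹ * (star v ⬝ᵥ (∑ i ∈ s, Amat p (χ i)) *ᵥ v) := by
  simp only [W, ← Finset.mul_sum, Matrix.sum_mulVec, dotProduct_sum]

theorem wigner_sum_along_line_nonneg_general (hp : Odd p) (v : ZMod p → ℂ)
    (χ₀ δ : ZMod p × ZMod p) (hδ : IsCoprime δ.1 δ.2) :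
    0 ≤ ∑ t : ZMod p, W p (χ₀ + t • δ) v ∧
    ¬ ∀ t : ZMod p, W p (χ₀ + t • δ) v < 0 := by
  have hsum : 0 ≤ ∑ t : ZMod p, W p (χ₀ + t • δ) v := by
    rw [sum_W_eq_dotProduct_mulVec]
    exact mul_nonneg (inv_nonneg.mpr (Nat.cast_nonneg p))
      ((posSemidef_sum_Amat_line hp χ₀ hδ).dotProduct_mulVec_nonneg v)
  exact ⟨hsum, fun hneg ↦
    (Finset.sum_neg (fun t _ ↦ hneg t) Finset.univ_nonempty).not_ge hsum⟩

end Displacement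

theorem wigner_sum_along_line_nonneg (v : ZMod 3 → ℂ) (hv : star v ⬝ᵥ v = 1)
    (χ₀ δ : ZMod 3 × ZMod 3) (hδ : δ ≠ 0) :
    0 ≤ ∑ t : ZMod 3, W 3 (χ₀ + t • δ) v ∧
    ¬ ∀ t : ZMod 3, W 3 (χ₀ + t • δ) v < 0 :=
  wigner_sum_along_line_nonneg_general (by decide) v χ₀ δ <|
    Semifield.isCoprime_iff.mpr <| by rwa [← not_and_or, ← Prod.mk_eq_zero]
end

section
/- Let G be the semidirect product (ZMod 3)² ⋊ SL(2, ZMod 3), where SL(2, ZMod 3) acts on (ZMod 3)² by matrix-vector multiplication. Then G has exactly 10 conjugacy classes. -/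
open Matrix

/-- The action of `SL(2, ZMod p)` on `(ZMod p)²` (written multiplicatively) by
matrix-vector multiplication, as a homomorphism into the automorphism group. -/
noncomputable def slAction (p : ℕ) [Fact p.Prime] :
    Matrix.SpecialLinearGroup (Fin 2) (ZMod p) →*
      MulAut (Multiplicative (Fin 2 → ZMod p)) where
  toFun A := AddEquiv.toMultiplicative
    (Matrix.SpecialLinearGroup.toLin' A).toAddEquiv
  map_one' := by
    ext x
    simp only [_root_.map_one]
    rfl
  map_mul' A B := by
    ext x
    simp only [_root_.map_mul]
    rfl

/-- The semidirect product `(ZMod p)² ⋊ SL(2, ZMod p)`. -/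
noncomputable def SemidirectGroup (p : ℕ) [Fact p.Prime] :=
  SemidirectProduct (Multiplicative (Fin 2 → ZMod p))
    (Matrix.SpecialLinearGroup (Fin 2) (ZMod p)) (slAction p)

noncomputable instance (p : ℕ) [Fact p.Prime] : Group (SemidirectGroup p) :=
  inferInstanceAs (Group (SemidirectProduct _ _ _))

/-!
An element of `(ZMod p)² ⋊ SL(2, ZMod p)` is an affine map `v ↦ A v + w` with `det A = 1`. If it has
a fixed point, it is conjugate to its linear part, and two linear maps are conjugate as affine maps
only if they are conjugate in `SL(2, ZMod p)`. Without a fixed point, `1` is an eigenvalue of `A`,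
and the map is conjugate to `v ↦ !![1, 0; s, 1] v + e₁` for exactly one `s`. This gives `p` further
classes.

In `SL(2, F)` a noncentral `A` is determined up to conjugacy by its trace `t` and by any nonzero
value of the quadratic form `det (v, A v)`, whose discriminant is `t ^ 2 - 4`. Over a finite field
of odd order `q` that form takes all values unless `t = 2` or `t = -2`, where its nonzero values
form a single square class. So there are `q + 2` noncentral classes, and two central ones.
-/

open scoped MatrixGroups

lemma isConj_iff_exists_semiconjBy {G : Type*} [Group G] {a b : G} :
    IsConj a b ↔ ∃ c : G, SemiconjBy c a b := by
  simp only [isConj_iff, SemiconjBy, mul_inv_eq_iff_eq_mul]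

section CommRing

variable {R : Type*} [CommRing R]

lemma isConj_SL_iff {n : Type*} [Fintype n] [DecidableEq n]
    {A B : Matrix.SpecialLinearGroup n R} :
    IsConj A B ↔ ∃ P : Matrix n n R, P.det = 1 ∧ A.1 * P = P * B.1 := by
  rw [isConj_comm, isConj_iff_exists_semiconjBy]
  constructor
  · rintro ⟨P, hP⟩
    exact ⟨P.1, P.2, (congrArg Subtype.val hP.eq).symm⟩
  · rintro ⟨P, hdet, hP⟩
    exact ⟨⟨P, hdet⟩, Subtype.ext hP.symm⟩

lemma trace_eq_of_isConj_SL {n : Type*} [Fintype n] [DecidableEq n]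
    {A B : Matrix.SpecialLinearGroup n R} (h : IsConj A B) : A.1.trace = B.1.trace := by
  obtain ⟨P, rfl⟩ := isConj_iff.1 h
  rw [Matrix.SpecialLinearGroup.coe_mul, trace_mul_comm, ← Matrix.SpecialLinearGroup.coe_mul,
    inv_mul_cancel_left]

lemma SL_two_det_eq_one (A : SL(2, R)) : A 0 0 * A 1 1 - A 0 1 * A 1 0 = 1 := by
  rw [← Matrix.det_fin_two, A.det_coe]

/-- The binary quadratic form `v ↦ det (v, A v)`. Its nonzero values come from cyclic vectors of
`A`, and the set of its values determines the conjugacy class of a noncentral `A ∈ SL(2, R)`. -/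
def cyclicForm (A : Matrix (Fin 2) (Fin 2) R) (v : Fin 2 → R) : R :=
  (Matrix.of ![v, A *ᵥ v]).det

lemma cyclicForm_apply (A : Matrix (Fin 2) (Fin 2) R) (v : Fin 2 → R) :
    cyclicForm A v = A 1 0 * v 0 ^ 2 + (A 1 1 - A 0 0) * v 0 * v 1 - A 0 1 * v 1 ^ 2 := by
  simp only [cyclicForm, det_fin_two, of_apply, cons_val_zero, cons_val_one, mulVec, dotProduct,
    Fin.sum_univ_two]
  ring

/-- The matrix of determinant one and trace `t` that sends `e₁` to `d • e₂`; for `d = 1` it is the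
companion matrix of `X ^ 2 - t * X + 1`. -/
def companionSL (t : R) (d : Rˣ) : SL(2, R) :=
  ⟨!![0, -↑d⁻¹; ↑d, t], by simp [det_fin_two_of]⟩

lemma coe_companionSL (t : R) (d : Rˣ) : (companionSL t d).1 = !![0, -↑d⁻¹; ↑d, t] := rfl

lemma trace_companionSL (t : R) (d : Rˣ) : (companionSL t d).1.trace = t := by
  simp [coe_companionSL, trace_fin_two]

lemma cyclicForm_companionSL (t : R) (d : Rˣ) (v : Fin 2 → R) :
    cyclicForm (companionSL t d).1 v = d * v 0 ^ 2 + t * v 0 * v 1 + ↑d⁻¹ * v 1 ^ 2 := by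
  simp [cyclicForm_apply, coe_companionSL]

lemma exists_cyclicForm_eq_of_isConj_companionSL {A : SL(2, R)} {t : R} {d : Rˣ}
    (h : IsConj A (companionSL t d)) : ∃ v, cyclicForm A.1 v = d := by
  obtain ⟨P, hdet, hP⟩ := isConj_SL_iff.1 h
  rw [det_fin_two] at hdet
  have h0 := congrFun₂ hP 0 0
  have h1 := congrFun₂ hP 1 0
  simp only [mul_apply, Fin.sum_univ_two, coe_companionSL, of_apply, cons_val_zero, cons_val_one,
    cons_val', cons_val_fin_one, mul_zero, zero_add] at h0 h1
  refine ⟨fun i => P i 0, ?_⟩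
  rw [cyclicForm_apply]
  linear_combination P 0 0 * h1 - P 1 0 * h0 + d * hdet

/-- In the basis `(v, d⁻¹ A v)` the matrix of `A` is `companionSL`, by Cayley–Hamilton. -/
lemma isConj_companionSL_of_cyclicForm_eq {A : SL(2, R)} {d : Rˣ} {v : Fin 2 → R}
    (hv : cyclicForm A.1 v = d) : IsConj A (companionSL A.1.trace d) := by
  have hd : (d : R) * ↑d⁻¹ = 1 := d.mul_inv
  have hA := SL_two_det_eq_one A
  refine isConj_SL_iff.2 ⟨!![v 0, ↑d⁻¹ * (A 0 0 * v 0 + A 0 1 * v 1);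
    v 1, ↑d⁻¹ * (A 1 0 * v 0 + A 1 1 * v 1)], ?_, ?_⟩
  · rw [cyclicForm_apply] at hv
    rw [det_fin_two_of]
    linear_combination (↑d⁻¹ : R) * hv + hd
  · simp only [← Matrix.ext_iff, Fin.forall_fin_two, coe_companionSL, trace_fin_two, mul_apply,
      Fin.sum_univ_two, of_apply, cons_val', cons_val_zero, cons_val_one, cons_val_fin_one]
    refine ⟨⟨?_, ?_⟩, ?_, ?_⟩
    · linear_combination -(A 0 0 * v 0 + A 0 1 * v 1) * hd
    · linear_combination -(↑d⁻¹ * v 0) * hA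
    · linear_combination -(A 1 0 * v 0 + A 1 1 * v 1) * hd
    · linear_combination -(↑d⁻¹ * v 1) * hA

lemma isConj_companionSL_iff {A : SL(2, R)} {t : R} {d : Rˣ} :
    IsConj A (companionSL t d) ↔ A.1.trace = t ∧ ∃ v, cyclicForm A.1 v = d := by
  constructor
  · intro h
    exact ⟨(trace_eq_of_isConj_SL h).trans (trace_companionSL t d),
      exists_cyclicForm_eq_of_isConj_companionSL h⟩
  · rintro ⟨rfl, v, hv⟩
    exact isConj_companionSL_of_cyclicForm_eq hv

lemma isConj_companionSL_companionSL_iff {t t' : R} {d d' : Rˣ} :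
    IsConj (companionSL t d) (companionSL t' d') ↔
      t = t' ∧ ∃ x y : R, d * (x ^ 2 + t * x * y + y ^ 2) = d' := by
  rw [isConj_companionSL_iff, trace_companionSL]
  have hd : (d : R) * ↑d⁻¹ = 1 := d.mul_inv
  refine and_congr_right fun _ => ⟨?_, ?_⟩
  · rintro ⟨v, hv⟩
    rw [cyclicForm_companionSL] at hv
    refine ⟨v 0, ↑d⁻¹ * v 1, ?_⟩
    linear_combination hv + (t * v 0 * v 1 + ↑d⁻¹ * v 1 ^ 2) * hd
  · rintro ⟨x, y, hxy⟩
    refine ⟨![x, d * y], ?_⟩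
    rw [cyclicForm_companionSL]
    simp only [cons_val_zero, cons_val_one]
    linear_combination hxy + d * y ^ 2 * hd

lemma mem_center_iff_cyclicForm_eq_zero {A : SL(2, R)} :
    A ∈ Subgroup.center SL(2, R) ↔ ∀ v, cyclicForm A.1 v = 0 := by
  simp only [cyclicForm_apply]
  constructor
  · intro hA v
    obtain ⟨r, -, hr⟩ := Matrix.SpecialLinearGroup.mem_center_iff.1 hA
    simp [← hr]
  · intro h
    have h10 : A 1 0 = 0 := by simpa using h ![1, 0]
    have h01 : A 0 1 = 0 := by simpa using h ![0, 1]
    have h11 : A 1 1 = A 0 0 := by simpa [h10, h01, sub_eq_zero] using h ![1, 1]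
    refine Matrix.SpecialLinearGroup.mem_center_iff.2 ⟨A 0 0, ?_, ?_⟩
    · simpa [h10, h11, sq] using SL_two_det_eq_one A
    · ext i j
      fin_cases i <;> fin_cases j <;> simp [h10, h01, h11]

lemma trace_sq_of_mem_center {A : SL(2, R)} (hA : A ∈ Subgroup.center SL(2, R)) :
    A.1.trace ^ 2 = 4 := by
  obtain ⟨r, hr, hrA⟩ := Matrix.SpecialLinearGroup.mem_center_iff.1 hA
  rw [Fintype.card_fin] at hr
  rw [← hrA, scalar_apply, trace_diagonal, Fin.sum_univ_two]
  linear_combination 4 * hr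

lemma coe_transvection_one_zero (s : R) :
    (Matrix.SpecialLinearGroup.transvection (one_ne_zero : (1 : Fin 2) ≠ 0) s).1 =
      !![1, 0; s, 1] := by
  ext i j
  fin_cases i <;> fin_cases j <;> simp [Matrix.SpecialLinearGroup.transvection_coe]

end CommRing

section Field

variable {F : Type*} [Field F]

lemma trace_injOn_center (h2 : (2 : F) ≠ 0) :
    Set.InjOn (fun A : SL(2, F) => A.1.trace) (Subgroup.center SL(2, F)) := by
  intro A hA B hB hAB
  obtain ⟨r, -, hr⟩ := Matrix.SpecialLinearGroup.mem_center_iff.1 hA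
  obtain ⟨s, -, hs⟩ := Matrix.SpecialLinearGroup.mem_center_iff.1 hB
  have hrs : r = s := by
    simpa [← hr, ← hs, trace_fin_two, ← two_mul, h2] using hAB
  exact Subtype.ext (by rw [← hr, ← hs, hrs])

lemma exists_mem_center_trace_eq (h2 : (2 : F) ≠ 0) {t : F} (ht : t ^ 2 = 4) :
    ∃ z ∈ Subgroup.center SL(2, F), z.1.trace = t := by
  have hsq : (t / 2) ^ 2 = 1 := by
    rw [div_pow, ht, div_eq_one_iff_eq (pow_ne_zero 2 h2)]
    norm_num
  refine ⟨⟨scalar (Fin 2) (t / 2), by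
      rwa [scalar_apply, det_diagonal, Fin.prod_univ_two, ← sq]⟩,
    Matrix.SpecialLinearGroup.mem_center_iff.2 ⟨t / 2, hsq, rfl⟩, ?_⟩
  simp only [scalar_apply, trace_diagonal, Fin.sum_univ_two, ← two_mul, mul_div_cancel₀ t h2]

lemma card_center_SL_two (hF : ringChar F ≠ 2) : Nat.card (Subgroup.center SL(2, F)) = 2 := by
  rw [Nat.card_congr (Matrix.SpecialLinearGroup.center_equiv_rootsOfUnity' (0 : Fin 2)).toEquiv,
    Fintype.card_fin]
  exact (IsPrimitiveRoot.neg_one (ringChar F) hF).card_rootsOfUnity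

/-- For `t ^ 2 = 4` the form `x ^ 2 + t * x * y + y ^ 2` is the square `(x + t / 2 * y) ^ 2`. -/
lemma isConj_companionSL_iff_isSquare_div (h2 : (2 : F) ≠ 0) {t : F} (ht : t ^ 2 = 4)
    {d d' : Fˣ} :
    IsConj (companionSL t d) (companionSL t d') ↔ IsSquare ((d' : F) / d) := by
  have hform (x y : F) : x ^ 2 + t * x * y + y ^ 2 = (x + t / 2 * y) * (x + t / 2 * y) := by
    field_simp
    linear_combination (-y ^ 2) * ht
  rw [isConj_companionSL_companionSL_iff]
  simp only [true_and, hform, IsSquare, div_eq_iff d.ne_zero, eq_comm (b := (d' : F)),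
    mul_comm (d : F)]
  constructor
  · rintro ⟨x, y, hxy⟩
    exact ⟨_, hxy⟩
  · rintro ⟨r, hr⟩
    exact ⟨r, 0, by simpa using hr⟩

/-- Representatives of the conjugacy classes of `SL(2, F)`, where `ν` is a nonsquare: one noncentral
class of each trace, a second noncentral class of trace `±2`, and the central classes. The two
signs are encoded as the elements of the center. -/
def classOfNormalForm (ν : Fˣ) :
    F ⊕ Subgroup.center SL(2, F) ⊕ Subgroup.center SL(2, F) → ConjClasses SL(2, F) :=
  Sum.elim (fun t => ConjClasses.mk (companionSL t 1))
    (Sum.elim (fun z => ConjClasses.mk (companionSL z.1.1.trace ν)) fun z => ConjClasses.mk z.1)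

lemma not_isConj_companionSL_of_mem_center {z : SL(2, F)} (hz : z ∈ Subgroup.center SL(2, F))
    (t : F) (d : Fˣ) : ¬ IsConj (companionSL t d) z := by
  intro h
  obtain ⟨v, hv⟩ := (isConj_companionSL_iff.1 h.symm).2
  exact d.ne_zero (hv.symm.trans (mem_center_iff_cyclicForm_eq_zero.1 hz v))

lemma classOfNormalForm_injective (h2 : (2 : F) ≠ 0) {ν : Fˣ} (hν : ¬ IsSquare (ν : F)) :
    Function.Injective (classOfNormalForm ν) := by
  refine .sumElim ?_ (.sumElim ?_ ?_ ?_) ?_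
  · intro t t' h
    exact (isConj_companionSL_companionSL_iff.1 (ConjClasses.mk_eq_mk_iff_isConj.1 h)).1
  · intro z z' h
    exact Subtype.ext (trace_injOn_center h2 z.2 z'.2
      (isConj_companionSL_companionSL_iff.1 (ConjClasses.mk_eq_mk_iff_isConj.1 h)).1)
  · intro z z' h
    exact Subtype.ext ((ConjClasses.mk_eq_mk_iff_isConj.1 h).eq_of_left_mem_center z.2)
  · intro z z' h
    exact not_isConj_companionSL_of_mem_center z'.2 _ _ (ConjClasses.mk_eq_mk_iff_isConj.1 h)
  · rintro t (z | z) h <;> have hconj := ConjClasses.mk_eq_mk_iff_isConj.1 h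
    · obtain rfl : t = z.1.1.trace := (isConj_companionSL_companionSL_iff.1 hconj).1
      rw [isConj_companionSL_iff_isSquare_div h2 (trace_sq_of_mem_center z.2)] at hconj
      exact hν (by simpa using hconj)
    · exact not_isConj_companionSL_of_mem_center z.2 _ _ hconj

end Field

section FiniteField

variable {F : Type*} [Field F] [Finite F]

lemma exists_sq_add_mul_sq_eq (hF : ringChar F ≠ 2) {c : F} (hc : c ≠ 0) (d : F) :
    ∃ x y : F, x ^ 2 + c * y ^ 2 = d := by
  have := Fintype.ofFinite F
  open Polynomial in
  obtain ⟨x, y, hxy⟩ := FiniteField.exists_root_sum_quadratic (f := X ^ 2)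
    (g := C c * X ^ 2 + C 0 * X + C (-d)) (degree_X_pow 2) (degree_quadratic hc)
    (FiniteField.odd_card_of_char_ne_two hF)
  refine ⟨x, y, ?_⟩
  simp only [Polynomial.eval_add, Polynomial.eval_mul, Polynomial.eval_pow, Polynomial.eval_X,
    Polynomial.eval_C] at hxy
  linear_combination hxy

lemma isConj_companionSL_of_sq_ne_four (hF : ringChar F ≠ 2) {t : F} (ht : t ^ 2 ≠ 4) (d d' : Fˣ) :
    IsConj (companionSL t d) (companionSL t d') := by
  have h2 : (2 : F) ≠ 0 := Ring.two_ne_zero hF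
  have hc : 1 - (t / 2) ^ 2 ≠ 0 := by
    intro h
    apply ht
    field_simp at h
    linear_combination -h
  obtain ⟨x, y, hxy⟩ := exists_sq_add_mul_sq_eq hF hc (d' / d : F)
  refine isConj_companionSL_companionSL_iff.2 ⟨rfl, x - t / 2 * y, y, ?_⟩
  calc (d * ((x - t / 2 * y) ^ 2 + t * (x - t / 2 * y) * y + y ^ 2) : F)
      = d * (x ^ 2 + (1 - (t / 2) ^ 2) * y ^ 2) := by field_simp; ring
    _ = (d' : F) := by rw [hxy, mul_div_cancel₀ _ d.ne_zero]

lemma isSquare_div_of_not_isSquare {a b : F} (ha : ¬ IsSquare a) (hb : ¬ IsSquare b) :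
    IsSquare (a / b) := by
  classical
  have := Fintype.ofFinite F
  have hab : a / b ≠ 0 := div_ne_zero (fun h => ha (h ▸ .zero)) (fun h => hb (h ▸ .zero))
  rw [← quadraticChar_one_iff_isSquare hab, div_eq_mul_inv, map_mul,
    quadraticChar_neg_one_iff_not_isSquare.2 ha,
    quadraticChar_neg_one_iff_not_isSquare.2 (by rwa [isSquare_inv])]
  norm_num

lemma classOfNormalForm_surjective (hF : ringChar F ≠ 2) {ν : Fˣ} (hν : ¬ IsSquare (ν : F)) :
    Function.Surjective (classOfNormalForm ν) := by
  have h2 : (2 : F) ≠ 0 := Ring.two_ne_zero hF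
  refine ConjClasses.mk_surjective.forall.2 fun A => ?_
  by_cases hA : A ∈ Subgroup.center SL(2, F)
  · exact ⟨.inr (.inr ⟨A, hA⟩), rfl⟩
  obtain ⟨v, hv⟩ := not_forall.1 (mt mem_center_iff_cyclicForm_eq_zero.2 hA)
  have hAd : IsConj A (companionSL A.1.trace (.mk0 _ hv)) :=
    isConj_companionSL_of_cyclicForm_eq rfl
  generalize Units.mk0 _ hv = d at hAd
  by_cases ht : A.1.trace ^ 2 = 4
  · by_cases hd : IsSquare (d : F)
    · refine ⟨.inl A.1.trace, ConjClasses.mk_eq_mk_iff_isConj.2 (.symm (hAd.trans ?_))⟩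
      exact (isConj_companionSL_iff_isSquare_div h2 ht).2 (by simpa using hd)
    · obtain ⟨z, hz, hzt⟩ := exists_mem_center_trace_eq h2 ht
      refine ⟨.inr (.inl ⟨z, hz⟩), ConjClasses.mk_eq_mk_iff_isConj.2 (.symm ?_)⟩
      rw [hzt]
      exact hAd.trans ((isConj_companionSL_iff_isSquare_div h2 ht).2
        (isSquare_div_of_not_isSquare hν hd))
  · exact ⟨.inl A.1.trace, ConjClasses.mk_eq_mk_iff_isConj.2
      (hAd.trans (isConj_companionSL_of_sq_ne_four hF ht d 1)).symm⟩

theorem card_conjClasses_SL_two (hF : ringChar F ≠ 2) :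
    Nat.card (ConjClasses SL(2, F)) = Nat.card F + 4 := by
  obtain ⟨a, ha⟩ := FiniteField.exists_nonsquare hF
  have hν : ¬ IsSquare (Units.mk0 a (fun h => ha (h ▸ .zero)) : F) := ha
  rw [← Nat.card_eq_of_bijective _ ⟨classOfNormalForm_injective (Ring.two_ne_zero hF) hν,
    classOfNormalForm_surjective hF hν⟩, Nat.card_sum, Nat.card_sum, card_center_SL_two hF]

end FiniteField

section SemidirectGroup

variable {p : ℕ} [Fact p.Prime]

/-- The element of the semidirect product that corresponds to the affine map `v ↦ A v + w`. -/
noncomputable def affineElt (A : SL(2, ZMod p)) (w : Fin 2 → ZMod p) : SemidirectGroup p :=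
  SemidirectProduct.mk (φ := slAction p) (Multiplicative.ofAdd w) A

lemma affineElt_surjective (g : SemidirectGroup p) : ∃ A w, affineElt A w = g :=
  ⟨SemidirectProduct.right g, Multiplicative.toAdd (SemidirectProduct.left g), rfl⟩

lemma affineElt_inj {A B : SL(2, ZMod p)} {v w : Fin 2 → ZMod p} :
    affineElt A v = affineElt B w ↔ A = B ∧ v = w :=
  SemidirectProduct.ext_iff.trans and_comm

lemma isConj_affineElt_iff {A B : SL(2, ZMod p)} {v w : Fin 2 → ZMod p} :
    IsConj (affineElt A v) (affineElt B w) ↔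
      ∃ (P : Matrix (Fin 2) (Fin 2) (ZMod p)) (u : Fin 2 → ZMod p),
        P.det = 1 ∧ A.1 * P = P * B.1 ∧ v + A.1 *ᵥ u = u + P *ᵥ w := by
  rw [isConj_comm, isConj_iff_exists_semiconjBy]
  constructor
  · rintro ⟨g, hg⟩
    obtain ⟨P, u, rfl⟩ := affineElt_surjective g
    obtain ⟨hP, hu⟩ := affineElt_inj.1 hg
    exact ⟨P.1, u, P.2, (congrArg Subtype.val hP).symm, hu.symm⟩
  · rintro ⟨P, u, hdet, hP, hu⟩
    exact ⟨affineElt ⟨P, hdet⟩ u, affineElt_inj.2 ⟨Subtype.ext hP.symm, hu.symm⟩⟩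

lemma isConj_affineElt_zero_iff {A B : SL(2, ZMod p)} :
    IsConj (affineElt A 0) (affineElt B 0) ↔ IsConj A B := by
  rw [isConj_affineElt_iff, isConj_SL_iff]
  constructor
  · rintro ⟨P, -, hdet, hP, -⟩
    exact ⟨P, hdet, hP⟩
  · rintro ⟨P, hdet, hP⟩
    exact ⟨P, 0, hdet, hP, by simp only [mulVec_zero]⟩

/-- Moving the fixed point `u` to the origin. -/
lemma isConj_affineElt_zero_of_fixed {A : SL(2, ZMod p)} {w u : Fin 2 → ZMod p}
    (hu : w + A.1 *ᵥ u = u) : IsConj (affineElt A w) (affineElt A 0) :=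
  isConj_affineElt_iff.2
    ⟨1, u, det_one, by rw [mul_one, one_mul], by rw [hu, mulVec_zero, add_zero]⟩

/-- The affine map `v ↦ !![1, 0; s, 1] v + e₁`. It has no fixed point since it raises the first
coordinate by one, and these maps are normal forms of the fixed-point-free elements. -/
noncomputable def glideElt (s : ZMod p) : SemidirectGroup p :=
  affineElt (.transvection one_ne_zero s) ![1, 0]

lemma not_isConj_affineElt_zero_glideElt (A : SL(2, ZMod p)) (s : ZMod p) :
    ¬ IsConj (affineElt A 0) (glideElt s) := by
  intro h
  obtain ⟨P, u, -, -, hu⟩ := isConj_affineElt_iff.1 h.symm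
  rw [coe_transvection_one_zero] at hu
  simpa [vecHead] using congrFun hu 0

lemma eq_of_isConj_glideElt {s s' : ZMod p} (h : IsConj (glideElt s) (glideElt s')) : s = s' := by
  obtain ⟨P, u, hdet, hP, hu⟩ := isConj_affineElt_iff.1 h
  simp only [coe_transvection_one_zero] at hP hu
  rw [det_fin_two] at hdet
  have h00 : 1 + u 0 = u 0 + P 0 0 := by simpa [vecHead] using congrFun hu 0
  have hs01 : P 0 1 * s' = 0 := by
    simpa [mul_apply, Fin.sum_univ_two] using congrFun₂ hP 0 0
  have hs11 : s * P 0 0 + P 1 0 = P 1 0 + P 1 1 * s' := by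
    simpa [mul_apply, Fin.sum_univ_two] using congrFun₂ hP 1 0
  linear_combination hs11 + (s + s' * P 1 1) * h00 + P 1 0 * hs01 + s' * hdet

lemma exists_isConj_affineElt_e₁ (A : SL(2, ZMod p)) {w : Fin 2 → ZMod p} (hw : w ≠ 0) :
    ∃ B, IsConj (affineElt A w) (affineElt B ![1, 0]) := by
  have hcoprime : IsCoprime (w 0) (w 1) := by
    by_contra h
    simp only [Semifield.isCoprime_iff, not_or, not_not] at h
    exact hw (funext (Fin.forall_fin_two.2 h))
  obtain ⟨P, hP0, hP1⟩ := hcoprime.exists_SL2_col 0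
  refine ⟨P⁻¹ * A * P, isConj_affineElt_iff.2 ⟨P.1, 0, P.2, ?_, ?_⟩⟩
  · exact congrArg Subtype.val (by group : A * P = P * (P⁻¹ * A * P))
  · ext i
    fin_cases i <;> simp [hP0, hP1]

/-- If `1` is not an eigenvalue of `A`, the affine map has the fixed point `(1 - A)⁻¹ e₁`. -/
lemma isConj_affineElt_e₁_of_trace_ne_two {A : SL(2, ZMod p)} (hA : A.1.trace ≠ 2) :
    IsConj (affineElt A ![1, 0]) (affineElt A 0) := by
  have hdet := SL_two_det_eq_one A
  rw [trace_fin_two] at hA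
  have hne : 2 - (A 0 0 + A 1 1) ≠ 0 := sub_ne_zero.2 hA.symm
  refine isConj_affineElt_zero_of_fixed
    (u := (2 - (A 0 0 + A 1 1))⁻¹ • ![1 - A 1 1, A 1 0]) ?_
  simp only [funext_iff, Fin.forall_fin_two, Pi.add_apply, Pi.smul_apply, smul_eq_mul, mulVec,
    dotProduct, Fin.sum_univ_two, cons_val_zero, cons_val_one, cons_val_fin_one]
  constructor <;> field_simp
  · linear_combination -hdet
  · ring

lemma isConj_affineElt_e₁_of_trace_eq_two_of_ne_zero {A : SL(2, ZMod p)} (hA : A.1.trace = 2)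
    (hc : A 1 0 ≠ 0) : IsConj (affineElt A ![1, 0]) (glideElt (A 1 0)) := by
  have hdet := SL_two_det_eq_one A
  rw [trace_fin_two] at hA
  refine isConj_affineElt_iff.2 ⟨!![1, (A 0 0 - 1) / A 1 0; 0, 1], 0, by simp, ?_, ?_⟩
  · rw [coe_transvection_one_zero]
    simp only [← Matrix.ext_iff, Fin.forall_fin_two, mul_apply, Fin.sum_univ_two, of_apply,
      cons_val', cons_val_zero, cons_val_one, cons_val_fin_one]
    refine ⟨⟨?_, ?_⟩, ?_, ?_⟩ <;> field_simp
    · ring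
    · linear_combination A 0 0 * hA - hdet
    · ring
    · linear_combination hA
  · ext i
    fin_cases i <;> simp

lemma isConj_affineElt_e₁_of_trace_eq_two_of_eq_zero {A : SL(2, ZMod p)} (hA : A.1.trace = 2)
    (hc : A 1 0 = 0) :
    IsConj (affineElt A ![1, 0]) (affineElt A 0) ∨ affineElt A ![1, 0] = glideElt 0 := by
  have hdet := SL_two_det_eq_one A
  rw [trace_fin_two] at hA
  rw [hc, mul_zero, sub_zero] at hdet
  have h00 : A 0 0 = 1 := by
    have hsq : (A 0 0 - 1) ^ 2 = 0 := by linear_combination A 0 0 * hA - hdet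
    exact sub_eq_zero.1 (pow_eq_zero_iff two_ne_zero |>.1 hsq)
  have h11 : A 1 1 = 1 := by linear_combination hA - h00
  by_cases hb : A 0 1 = 0
  · right
    refine affineElt_inj.2 ⟨Subtype.ext ?_, rfl⟩
    ext i j
    fin_cases i <;> fin_cases j <;> simp [h00, h11, hb, hc]
  · left
    refine isConj_affineElt_zero_of_fixed (u := ![0, -(A 0 1)⁻¹]) ?_
    ext i
    fin_cases i <;> simp [h11, hb]

lemma isConj_affineElt_zero_or_glideElt (A : SL(2, ZMod p)) (w : Fin 2 → ZMod p) :
    (∃ B, IsConj (affineElt A w) (affineElt B 0)) ∨ ∃ s, IsConj (affineElt A w) (glideElt s) := by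
  rcases eq_or_ne w 0 with rfl | hw
  · exact .inl ⟨A, .refl _⟩
  obtain ⟨B, hB⟩ := exists_isConj_affineElt_e₁ A hw
  by_cases htr : B.1.trace = 2
  · by_cases hc : B 1 0 = 0
    · obtain h | h := isConj_affineElt_e₁_of_trace_eq_two_of_eq_zero htr hc
      · exact .inl ⟨B, hB.trans h⟩
      · exact .inr ⟨0, h ▸ hB⟩
    · exact .inr ⟨_, hB.trans (isConj_affineElt_e₁_of_trace_eq_two_of_ne_zero htr hc)⟩
  · exact .inl ⟨B, hB.trans (isConj_affineElt_e₁_of_trace_ne_two htr)⟩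

/-- The conjugacy classes of the semidirect product: those with a fixed point come from conjugacy
classes of `SL(2, ZMod p)`, the others contain exactly one `glideElt`. -/
noncomputable def affineClass : ConjClasses SL(2, ZMod p) ⊕ ZMod p →
    ConjClasses (SemidirectGroup p) :=
  Sum.elim (Quotient.map (affineElt · 0) fun _ _ => isConj_affineElt_zero_iff.2)
    fun s => ConjClasses.mk (glideElt s)

lemma affineClass_injective : Function.Injective (affineClass (p := p)) := by
  refine .sumElim ?_ ?_ ?_
  · refine ConjClasses.mk_surjective.forall₂.2 fun A B h => ?_
    exact ConjClasses.mk_eq_mk_iff_isConj.2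
      (isConj_affineElt_zero_iff.1 (ConjClasses.mk_eq_mk_iff_isConj.1 h))
  · exact fun s s' h => eq_of_isConj_glideElt (ConjClasses.mk_eq_mk_iff_isConj.1 h)
  · refine ConjClasses.mk_surjective.forall.2 fun A s h => ?_
    exact not_isConj_affineElt_zero_glideElt A s (ConjClasses.mk_eq_mk_iff_isConj.1 h)

lemma affineClass_surjective : Function.Surjective (affineClass (p := p)) := by
  refine ConjClasses.mk_surjective.forall.2 fun g => ?_
  obtain ⟨A, w, rfl⟩ := affineElt_surjective g
  obtain ⟨B, hB⟩ | ⟨s, hs⟩ := isConj_affineElt_zero_or_glideElt A w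
  · exact ⟨.inl (ConjClasses.mk B), ConjClasses.mk_eq_mk_iff_isConj.2 hB.symm⟩
  · exact ⟨.inr s, ConjClasses.mk_eq_mk_iff_isConj.2 hs.symm⟩

theorem card_conjClasses_semidirectGroup :
    Nat.card (ConjClasses (SemidirectGroup p)) = Nat.card (ConjClasses SL(2, ZMod p)) + p := by
  rw [← Nat.card_eq_of_bijective _ ⟨affineClass_injective, affineClass_surjective (p := p)⟩,
    Nat.card_sum, Nat.card_zmod]

end SemidirectGroup

theorem qutrit_clifford_ten_conjugacy_classes_general {p : ℕ} [Fact p.Prime] (hp : p ≠ 2) :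
    Nat.card (ConjClasses (SemidirectGroup p)) = 2 * p + 4 := by
  rw [card_conjClasses_semidirectGroup, card_conjClasses_SL_two (by rwa [ZMod.ringChar_zmod_n]),
    Nat.card_zmod]
  ring

theorem qutrit_clifford_ten_conjugacy_classes :
    Nat.card (ConjClasses (SemidirectGroup 3)) = 10 :=
  qutrit_clifford_ten_conjugacy_classes_general (by norm_num)
end
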